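/- For the Grassmann algebra Λ = k[θ]/(θ²) over a field k of characteristic 0, the cyclic cohomology groups satisfy HC^{2n}(Λ) ≅ k² and HC^{2n+1}(Λ) ≅ k for all n ≥ 0, with explicit basis cocycles λ⁺_{2n}(a₀,…,a_{2n}) = a₀⁺⋯a_{2n}⁺ and λ⁻_n(a₀,…,a_n) = a₀⁻⋯a_n⁻, where a = a⁺·1 + a⁻·θ. -/

import Mathlib

/- STATEMENT 19: For the Grassmann algebra Λ = k[θ]/(θ²) (dual numbers,
θ = ε, |θ| = 1) over a field k of characteristic 0, the cyclic cohomology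
satisfies HC^{2n}(Λ) ≅ k² and HC^{2n+1}(Λ) ≅ k for all n ≥ 0, with basis
cocycles
  λ⁺_{2n}(a₀,…,a_{2n}) = a₀⁺ ⋯ a_{2n}⁺  and  λ⁻_m(a₀,…,a_m) = a₀⁻ ⋯ a_m⁻,
where a = a⁺·1 + a⁻·θ.  Concretely:
(i) λ⁺ (in even degrees) and λ⁻ (in all degrees) are graded-cyclic cochains
    annihilated by the graded Hochschild differential on C^•(Λ,Λ*);
(ii) modulo coboundaries of cyclic cochains, every cyclic cocycle of degree 2n
    is a unique combination c λ⁺ + d λ⁻, and of degree 2n+1 a unique multiple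
    of λ⁻.
Graded cyclicity and the differential carry the Koszul signs built from the
shifted degrees ā = |a| − 1, evaluated on tuples of homogeneous basis elements
(which determine the multilinear cochains). -/

open scoped BigOperators

variable {k : Type*} [Field k] [CharZero k]

/-- the homogeneous basis elements of `Λ`: `true ↦ θ`, `false ↦ 1`. -/
noncomputable def elt (b : Bool) : DualNumber k := if b then DualNumber.eps else 1

/-- the shifted degree `ā = |a| − 1 (mod 2)` of a basis element. -/
def sdeg (b : Bool) : ℕ := if b then 0 else 1

/-- the coordinate functional `a ↦ a⁺`. -/
def fstL : DualNumber k →ₗ[k] k where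
  toFun x := x.fst
  map_add' _ _ := rfl
  map_smul' _ _ := rfl

/-- the coordinate functional `a ↦ a⁻`. -/
def sndL : DualNumber k →ₗ[k] k where
  toFun x := x.snd
  map_add' _ _ := rfl
  map_smul' _ _ := rfl

/-- `λ⁺(a₀,…,a_{m−1}) = a₀⁺⋯a_{m−1}⁺` as a multilinear map in `m` arguments. -/
noncomputable def lamP (m : ℕ) :
    MultilinearMap k (fun _ : Fin m => DualNumber k) k :=
  (MultilinearMap.mkPiAlgebra k (Fin m) k).compLinearMap fun _ => fstL

/-- `λ⁻(a₀,…,a_{m−1}) = a₀⁻⋯a_{m−1}⁻` as a multilinear map in `m` arguments. -/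
noncomputable def lamM (m : ℕ) :
    MultilinearMap k (fun _ : Fin m => DualNumber k) k :=
  (MultilinearMap.mkPiAlgebra k (Fin m) k).compLinearMap fun _ => sndL

/-- graded cyclicity of a degree-`p` cochain (with `p+1` arguments):
`g(a₀,…,a_p) = (−1)^{ā₀(ā₁+⋯+ā_p)} g(a₁,…,a_p,a₀)` on homogeneous basis
tuples. -/
noncomputable def IsCyclicG (p : ℕ)
    (g : MultilinearMap k (fun _ : Fin (p + 1) => DualNumber k) k) : Prop :=
  ∀ ε : Fin (p + 1) → Bool,
    g (fun i => elt (ε i))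
      = (-1 : ℤ) ^ (sdeg (ε 0) *
            ∑ i : Fin (p + 1), if (i : ℕ) = 0 then 0 else sdeg (ε i)) •
          g (fun i => elt (ε (finRotate (p + 1) i)))

/-- the graded Hochschild differential on `C^p(Λ,Λ*) ≅ Hom(Λ^{⊗(p+1)}, k)`:
`(∂g)(a₀,…,a_{p+1}) = Σ_{j=0}^{p} (−1)^{ā₀+⋯+ā_j} g(a₀,…,a_j a_{j+1},…,a_{p+1})
  + (−1)^{(ā₀+1)(ā₁+⋯+ā_{p+1})} g(a₁,…,a_p, a_{p+1} a₀)`,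
evaluated on homogeneous basis tuples. -/
noncomputable def cyclicGD (p : ℕ)
    (h : MultilinearMap k (fun _ : Fin (p + 1) => DualNumber k) k)
    (ε : Fin (p + 2) → Bool) : k :=
  (∑ j : Fin (p + 1),
      (-1 : ℤ) ^ (∑ i : Fin (p + 2), if (i : ℕ) ≤ (j : ℕ) then sdeg (ε i) else 0)
        • h (fun i =>
            if i = j then (elt (ε i.castSucc) : DualNumber k) * elt (ε i.succ)
            else if (i : ℕ) < (j : ℕ) then elt (ε i.castSucc)
            else elt (ε i.succ)))
    + (-1 : ℤ) ^ ((sdeg (ε 0) + 1) *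
          ∑ i : Fin (p + 2), if (i : ℕ) = 0 then 0 else sdeg (ε i)) •
        h (fun i =>
          if (i : ℕ) = p then (elt (ε (Fin.last (p + 1))) : DualNumber k) * elt (ε 0)
          else elt (ε i.succ))


namespace GC

set_option linter.all false

/-- sign of a letter -/
def ep (b : Bool) : k := if b then 1 else -1

/-- sign of a word -/
def sg : List Bool → k
  | [] => 1
  | a :: v => ep a * sg v

/-- linear (bar) differential on functions of words -/
def bp : List Bool → (List Bool → k) → k
  | [], _ => 0
  | [_], _ => 0
  | a :: b :: v, F => ep a * ((if a && b then 0 else F ((a || b) :: v))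
      + bp (b :: v) (fun x => F (a :: x)))

/-- multiply the last letter by `a` -/
def wl (a : Bool) : List Bool → (List Bool → k) → k
  | [], _ => 0
  | [b], F => if b && a then 0 else F [b || a]
  | x :: y :: v, F => wl a (y :: v) (fun z => F (x :: z))

/-- wrap-around term -/
def wr : List Bool → (List Bool → k) → k
  | [], _ => 0
  | a :: v, F => (if a then sg v else 1) * wl a v F

/-- the differential on functions of words -/
def dd (F : List Bool → k) (w : List Bool) : k := bp w F + wr w F

/-- the homotopy: doubling of the letters `1` -/
def hp : List Bool → (List Bool → k) → k
  | [], _ => 0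
  | a :: v, F => (if a then 0 else - F (false :: false :: v)) + ep a * hp v (fun x => F (a :: x))

def Cyc (f : List Bool → k) : Prop :=
  ∀ a v, f (a :: v) = (if a then 1 else sg v) * f (v ++ [a])

def one (a b : Bool) : ℕ := if a && !b then 1 else 0

def tr : List Bool → ℕ
  | [] => 0
  | [_] => 0
  | a :: b :: v => one a b + tr (b :: v)

def NN : List Bool → ℕ
  | [] => 0
  | a :: v => tr (a :: (v ++ [a]))

theorem ep_sq (a : Bool) : (ep a : k) * ep a = 1 := by cases a <;> simp [ep]

theorem sg_sq (v : List Bool) : (sg v : k) * sg v = 1 := by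
  induction v with
  | nil => simp [sg]
  | cons a v ih =>
    simp only [sg]
    linear_combination (sg v * sg v) * ep_sq (k := k) a + ih

theorem sg_append (u v : List Bool) : (sg (u ++ v) : k) = sg u * sg v := by
  induction u with
  | nil => simp [sg]
  | cons a u ih => simp [sg, ih, mul_assoc]

theorem bp_lin (c d : k) (v : List Bool) : ∀ (F G : List Bool → k),
    bp v (fun x => c * F x + d * G x) = c * bp v F + d * bp v G := by
  induction v with
  | nil => simp [bp]
  | cons a v ih =>
    cases v with
    | nil => simp [bp]
    | cons b v =>
      intro F G
      simp only [bp, ih]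
      split_ifs <;> ring

theorem wl_lin (a : Bool) (c d : k) (v : List Bool) : ∀ (F G : List Bool → k),
    wl a v (fun x => c * F x + d * G x) = c * wl a v F + d * wl a v G := by
  induction v with
  | nil => simp [wl]
  | cons x v ih =>
    cases v with
    | nil => intro F G; simp only [wl]; split_ifs <;> ring
    | cons b v =>
      intro F G
      simp only [wl, ih]

theorem dd_lin (c d : k) (v : List Bool) (F G : List Bool → k) :
    dd (fun x => c * F x + d * G x) v = c * dd F v + d * dd G v := by
  simp only [dd, bp_lin]
  cases v with
  | nil => simp [wr]
  | cons a v => simp only [wr, wl_lin]; ring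

theorem hp_lin (c d : k) (v : List Bool) : ∀ (F G : List Bool → k),
    hp v (fun x => c * F x + d * G x) = c * hp v F + d * hp v G := by
  induction v with
  | nil => simp [hp]
  | cons a v ih =>
      intro F G
      simp only [hp, ih]
      split_ifs <;> ring

theorem wl_append (a c : Bool) (u : List Bool) : ∀ (F : List Bool → k),
    wl a (u ++ [c]) F = if c && a then 0 else F (u ++ [c || a]) := by
  induction u with
  | nil => intro F; simp [wl]
  | cons x u ih =>
    intro F
    cases u with
    | nil => simp [wl]
    | cons y u =>
      simp only [List.cons_append, wl] at ih ⊢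
      exact ih _

theorem wl_false (v : List Bool) (hv : v ≠ []) (F : List Bool → k) : wl false v F = F v := by
  obtain ⟨u, c, rfl⟩ := List.eq_nil_or_concat v |>.resolve_left hv
  simp [wl_append]

theorem dd_e (f : List Bool → k) (v : List Bool) :
    dd f (false :: v) = - bp v (fun x => f (false :: x)) := by
  cases v with
  | nil => simp [dd, bp, wr, wl]
  | cons b v => simp [dd, bp, wr, wl_false, ep]

theorem bp_congr (v : List Bool) : ∀ (F G : List Bool → k),
    (∀ x, x.length + 1 = v.length → x.count true = v.count true → F x = G x) →
    bp v F = bp v G := by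
  induction v with
  | nil => simp [bp]
  | cons a v ih =>
    cases v with
    | nil => simp [bp]
    | cons b v =>
      intro F G h
      simp only [bp]
      rw [ih (fun x => F (a :: x)) (fun x => G (a :: x))]
      · congr 2
        split_ifs with hab
        · rfl
        · apply h
          · simp
          · cases a <;> cases b <;> simp_all
      · intro x h1 h2
        apply h
        · simp_all
        · rw [List.count_cons, List.count_cons (b := a), h2]

theorem bp_zero (v : List Bool) : bp v (fun _ => (0:k)) = 0 := by
  have := bp_lin (0:k) 0 v (fun _ => 0) (fun _ => 0)
  simpa using this

theorem hp_zero (v : List Bool) : hp v (fun _ => (0:k)) = 0 := by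
  have := hp_lin (0:k) 0 v (fun _ => 0) (fun _ => 0)
  simpa using this

/-- functions on nonempty lists suffice for `bp` on words of length at least two -/
theorem bp_bp (v : List Bool) : ∀ (F : List Bool → k), bp v (fun x => bp x F) = 0 := by
  induction v with
  | nil => simp [bp]
  | cons a v ih =>
    intro F
    cases v with
    | nil => simp [bp]
    | cons b v =>
      cases v with
      | nil => cases a <;> cases b <;> simp [bp]
      | cons c v =>
        have key : bp (b :: c :: v) (fun x => bp (a :: x) F)
            = bp (b :: c :: v) (fun x => ep a * (match x with
                | [] => 0
                | y :: x => if a && y then 0 else F ((a || y) :: x))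
                + ep a * bp x (fun x => F (a :: x))) := by
          apply bp_congr
          intro x hx _
          cases x with
          | nil => simp at hx
          | cons y x => simp only [bp]; ring
        rw [bp_lin, ih] at key
        rw [bp, key]
        simp only [bp]
        cases a <;> cases b <;> cases c <;> simp [ep, bp_zero] <;> ring

theorem hp_congr (v : List Bool) : ∀ (F G : List Bool → k),
    (∀ x, x.length = v.length + 1 → x.count true = v.count true → F x = G x) →
    hp v F = hp v G := by
  induction v with
  | nil => simp [hp]
  | cons a v ih =>
      intro F G h
      simp only [hp]
      rw [ih (fun x => F (a :: x)) (fun x => G (a :: x))]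
      · cases a
        · simp only [Bool.false_eq_true, if_false]
          rw [h (false :: false :: v)] <;> simp
        · simp
      · intro x h1 h2
        apply h
        · simp_all
        · rw [List.count_cons, List.count_cons (b := a), h2]

theorem bp_hp (v : List Bool) : v ≠ [] → ∀ (F : List Bool → k),
    bp v (fun x => hp x F) + hp v (fun x => bp x F) = (1 - (tr (v ++ [false]) : k)) * F v := by
  induction v with
  | nil => simp
  | cons a v ih =>
    intro _ F
    cases v with
    | nil => cases a <;> simp [bp, hp, tr, one, ep]
    | cons b v =>
      have ih := ih (by simp) (fun x => F (a :: x))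
      have key : hp (b :: v) (fun x => bp (a :: x) F)
            = hp (b :: v) (fun x => ep a * (match x with
                | [] => 0
                | y :: x => if a && y then 0 else F ((a || y) :: x))
                + ep a * bp x (fun x => F (a :: x))) := by
        apply hp_congr
        intro x hx _
        cases x with
        | nil => simp at hx
        | cons y x => simp only [bp]; ring
      rw [hp_lin (ep a) (ep a)] at key
      have key2 := bp_lin (if a then 0 else -1) (ep a) (b :: v)
        (fun x => F (false :: false :: x)) (fun x => hp x (fun y => F (a :: y)))
      have key3 : bp (b :: v) (fun x => hp (a :: x) F) =
          bp (b :: v) (fun x => (if a then 0 else -1) * F (false :: false :: x)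
            + ep a * hp x (fun y => F (a :: y))) := by
        congr 1; funext x; simp only [hp]; split_ifs <;> simp
      rw [key2] at key3
      rw [bp, hp.eq_2 _ a (b :: v), key, key3]
      simp only [List.cons_append, tr] at ih ⊢
      push_cast
      cases a <;> cases b <;> simp [ep, one, bp, hp, hp_zero] at ih ⊢ <;> linear_combination ih

theorem Cyc.rot {f : List Bool → k} (hf : Cyc f) (u v : List Bool) :
    ∃ c : k, f (u ++ v) = c * f (v ++ u) := by
  induction u generalizing v with
  | nil => exact ⟨1, by simp⟩
  | cons a u ih =>
    obtain ⟨c, hc⟩ := ih (v ++ [a])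
    refine ⟨(if a then 1 else sg (u ++ v)) * c, ?_⟩
    rw [List.cons_append, hf, List.append_assoc, hc]
    simp [mul_assoc]

theorem Cyc.zero {f : List Bool → k} (hf : Cyc f) (h1 : ∀ v, f (false :: v) = 0)
    (h2 : ∀ n, f (List.replicate n true) = 0) (w : List Bool) : f w = 0 := by
  by_cases h : false ∈ w
  · obtain ⟨u, v, rfl⟩ := List.append_of_mem h
    obtain ⟨c, hc⟩ := hf.rot u (false :: v)
    rw [hc, List.cons_append, h1, mul_zero]
  · have : w = List.replicate w.length true := by
      apply List.eq_replicate_of_mem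
      intro b hb
      cases b <;> simp_all
    rw [this, h2]

theorem bp_append (a c : Bool) (u : List Bool) : ∀ (F : List Bool → k),
    bp (u ++ [c, a]) F = bp (u ++ [c]) (fun x => F (x ++ [a]))
      + sg (u ++ [c]) * (if c && a then 0 else F (u ++ [c || a])) := by
  induction u with
  | nil => intro F; simp [bp, sg]
  | cons x u ih =>
    intro F
    cases u with
    | nil => 
      have := ih (fun z => F (x :: z))
      simp only [List.nil_append, List.cons_append, bp, sg] at this ⊢
      split_ifs <;> simp <;> ring
    | cons y u =>
      have := ih (fun z => F (x :: z))
      simp only [List.cons_append, bp, sg] at this ⊢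
      rw [this, List.append_assoc, List.cons_append, List.nil_append]
      split_ifs <;> ring

theorem bp_sgn (s : List Bool → k) (G : List Bool → k) (t : k) (v : List Bool)
    (h : ∀ x, x.length + 1 = v.length → x.count true = v.count true → s x = t) :
    bp v (fun x => s x * G x) = t * bp v G := by
  rw [bp_congr v _ (fun x => t * G x + 0 * G x), bp_lin]
  · simp
  · intro x h1 h2; rw [h x h1 h2]; simp

theorem sg_eq (v : List Bool) : (sg v : k) = (-1) ^ (v.length + v.count true) := by
  induction v with
  | nil => simp [sg]
  | cons a v ih => cases a <;> simp [sg, ih, ep] <;> ring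

theorem dd_cyc {f : List Bool → k} (hf : Cyc f) : Cyc (dd f) := by
  intro a w
  rcases List.eq_nil_or_concat w with rfl | ⟨u, c, hw⟩
  · simp [sg]
  simp only [List.concat_eq_append] at hw
  -- first letter
  obtain ⟨b, v, hw2⟩ : ∃ b v, w = b :: v := by
    cases w with
    | nil => simp at hw
    | cons b v => exact ⟨b, v, rfl⟩
  have e1 : dd f (a :: w) = ep a * (if a && b then 0 else f ((a || b) :: v))
      + ep a * bp w (fun x => f (a :: x))
      + (if a then sg w else 1) * (if c && a then 0 else f (u ++ [c || a])) := by
    have : wl a w f = (if c && a then 0 else f (u ++ [c || a])) := by rw [hw, wl_append]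
    rw [dd, wr, this, hw2, bp]; ring
  have e2 : dd f (w ++ [a]) = bp w (fun x => f (x ++ [a]))
      + sg w * (if c && a then 0 else f (u ++ [c || a]))
      + (if b then sg (v ++ [a]) else 1) * (if a && b then 0 else f (v ++ [a || b])) := by
    have : bp (w ++ [a]) f = bp w (fun x => f (x ++ [a]))
      + sg w * (if c && a then 0 else f (u ++ [c || a])) := by
      rw [hw, ← bp_append]; simp
    rw [dd, this, hw2, List.cons_append, wr, wl_append]
  have e3 : bp w (fun x => f (a :: x)) =
      (if a then 1 else - sg w) * bp w (fun x => f (x ++ [a])) := by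
    rw [← bp_sgn (fun x => if a then 1 else sg x)]
    · congr 1; funext x; exact hf a x
    · intro x h1 h2
      split_ifs
      · rfl
      · rw [sg_eq, sg_eq, ← h1, h2]; ring
  have e4 := hf (a || b) v
  have hs := sg_sq (k := k) v
  have hs2 := sg_sq (k := k) w
  have e5 : (sg w : k) = ep b * sg v := by rw [hw2, sg]
  rw [e1, e2, e3]
  generalize (if (c && a) = true then 0 else f (u ++ [c || a])) = X at *
  generalize bp w (fun x => f (x ++ [a])) = Y at *
  rw [sg_append]
  cases a <;> cases b <;> simp [ep, sg] at e4 e5 ⊢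
  all_goals (try rw [e4])
  all_goals (rw [e5] at *)
  all_goals (try ring_nf at hs hs2 ⊢)
  all_goals (try simp only [hs, hs2])
  all_goals (try ring)

theorem hp_append (a : Bool) (u : List Bool) : ∀ (F : List Bool → k),
    hp (u ++ [a]) F = hp u (fun x => F (x ++ [a]))
      + sg u * (if a then 0 else - F (u ++ [false, false])) := by
  induction u with
  | nil => intro F; simp [hp, sg]
  | cons x u ih =>
    intro F
    have := ih (fun z => F (x :: z))
    simp only [List.cons_append, hp, sg] at this ⊢
    rw [this]
    split_ifs <;> ring

theorem hp_sgn (s : List Bool → k) (G : List Bool → k) (t : k) (v : List Bool)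
    (h : ∀ x, x.length = v.length + 1 → x.count true = v.count true → s x = t) :
    hp v (fun x => s x * G x) = t * hp v G := by
  rw [hp_congr v _ (fun x => t * G x + 0 * G x), hp_lin]
  · simp
  · intro x h1 h2; rw [h x h1 h2]; simp

theorem hp_cyc {f : List Bool → k} (hf : Cyc f) : Cyc (fun w => hp w f) := by
  intro a w
  have e3 : hp w (fun x => f (a :: x)) =
      (if a then 1 else - sg w) * hp w (fun x => f (x ++ [a])) := by
    rw [← hp_sgn (fun x => if a then 1 else sg x)]
    · congr 1; funext x; exact hf a x
    · intro x h1 h2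
      split_ifs
      · rfl
      · rw [sg_eq, sg_eq, h1, h2]; ring
  simp only [hp_append, hp, e3]
  have hs := sg_sq (k := k) w
  cases a
  · have h1 := hf false (false :: w)
    have h2 := hf false (w ++ [false])
    simp [sg, sg_append, ep] at h1 h2 ⊢
    rw [h1, h2]
    ring
  · simp [ep]

theorem tr_append (c d : Bool) (u : List Bool) : tr (u ++ [c, d]) = tr (u ++ [c]) + one c d := by
  induction u with
  | nil => simp [tr]
  | cons x u ih =>
    cases u with
    | nil => simp [tr]
    | cons y u => simp only [List.cons_append, tr] at ih ⊢; omega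

theorem NN_rot (a : Bool) (v : List Bool) : NN (a :: v) = NN (v ++ [a]) := by
  cases v with
  | nil => simp
  | cons b v =>
    have := tr_append a b (b :: v)
    simp only [List.cons_append, NN, tr, List.append_assoc, List.nil_append] at this ⊢
    omega

theorem dd_true (f : List Bool → k) (n : ℕ) : dd f (List.replicate n true) = 0 := by
  have h1 : ∀ n, ∀ f : List Bool → k, bp (List.replicate n true) f = 0 := by
    intro n
    induction n with
    | zero => simp [bp]
    | succ n ih =>
      intro f
      cases n with
      | zero => simp [bp]
      | succ n => simp only [List.replicate_succ, bp] at ih ⊢; simp [ih]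
  rw [dd, h1]
  cases n with
  | zero => simp [wr]
  | succ n =>
    cases n with
    | zero => simp [wr, wl]
    | succ n =>
      rw [List.replicate_succ, wr, List.replicate_succ', wl_append]; simp

theorem tr_true (n : ℕ) : tr (List.replicate n true) = 0 := by
  induction n with
  | zero => simp [tr]
  | succ n ih =>
    cases n with
    | zero => simp [tr]
    | succ n => simp only [List.replicate_succ, tr, one] at ih ⊢; simp [ih]

theorem NN_true (n : ℕ) : NN (List.replicate n true) = 0 := by
  cases n with
  | zero => simp [NN]
  | succ n =>
    rw [List.replicate_succ, NN, ← List.replicate_succ', ← List.replicate_succ, tr_true]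

theorem Cyc.lin {f g : List Bool → k} (hf : Cyc f) (hg : Cyc g) (c d : k) :
    Cyc (fun x => c * f x + d * g x) := by
  intro a v
  simp only
  rw [hf, hg]; ring

theorem Cyc.N {f : List Bool → k} (hf : Cyc f) : Cyc (fun x => (NN x : k) * f x) := by
  intro a v
  simp only
  rw [hf, NN_rot]; ring

theorem NN_e (v : List Bool) : NN (false :: v) = tr (v ++ [false]) := by
  cases v <;> simp [NN, tr, one]

theorem homotopy {f : List Bool → k} (hf : Cyc f) (w : List Bool) :
    (dd (fun x => hp x f) w + hp w (dd f)) = - ((NN w : k) * f w) := by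
  have hc : Cyc (fun w => 1 * (1 * dd (fun x => hp x f) w + 1 * hp w (dd f)) + 1 * ((NN w : k) * f w)) :=
    ((dd_cyc (hp_cyc hf)).lin (hp_cyc (dd_cyc hf)) 1 1).lin hf.N 1 1
  have := hc.zero ?_ ?_ w
  · linear_combination this
  · intro v
    rw [dd_e, NN_e]
    have e1 : bp v (fun x => hp (false :: x) f) =
      bp v (fun x => (-1) * f (false :: false :: x) + (-1) * hp x (fun y => f (false :: y))) := by
      congr 1; funext x; simp [hp, ep]
    have e2 : hp (false :: v) (dd f) = bp (false :: v) (fun x => f (false :: x))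
        + hp v (fun x => bp x (fun y => f (false :: y))) := by
      rw [hp]
      have : hp v (fun x => dd f (false :: x)) =
        hp v (fun x => (-1) * bp x (fun y => f (false :: y)) + 0 * 0) := by
        congr 1; funext x; rw [dd_e]; simp
      rw [this, hp_lin, dd_e]; simp [ep]
    rw [e1, bp_lin, e2]
    cases v with
    | nil => simp [bp, hp, tr]
    | cons b v =>
      have := bp_hp (b :: v) (by simp) (fun y => f (false :: y))
      simp only [bp] at this ⊢
      simp [ep] at this ⊢
      linear_combination this
  · intro n
    have : ∀ n, ∀ g : List Bool → k, hp (List.replicate n true) g = 0 := by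
      intro n
      induction n with
      | zero => simp [hp]
      | succ n ih => intro g; simp [List.replicate_succ, hp, ih]
    simp [dd_true, NN_true, this]

theorem dd_dd {f : List Bool → k} (hf : Cyc f) (w : List Bool) : dd (dd f) w = 0 := by
  apply (dd_cyc (dd_cyc hf)).zero _ (dd_true _)
  intro v
  rw [dd_e]
  have : bp v (fun x => dd f (false :: x)) =
      bp v (fun x => (-1) * bp x (fun y => f (false :: y)) + 0 * 0) := by
    congr 1; funext x; rw [dd_e]; simp
  rw [this, bp_lin, bp_bp]; simp

theorem exact_aux (r : ℕ) : ∀ g : List Bool → k, Cyc g → (∀ w, dd g w = 0) →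
    (∀ w, g w ≠ 0 → 1 ≤ NN w ∧ NN w ≤ r) → ∃ h, Cyc h ∧ ∀ w, g w = dd h w := by
  induction r with
  | zero =>
    intro g hg _ hs
    refine ⟨g, hg, fun w => ?_⟩
    have : g w = 0 := by
      by_contra h
      have := hs w h
      omega
    simp_all
  | succ r ih =>
    intro g hg hd hs
    have hN : ∀ w, (NN w : k) * g w = - dd (fun x => hp x g) w := by
      intro w
      have := homotopy hg w
      have e : dd g = fun _ => 0 := funext hd
      rw [e, hp_zero] at this
      linear_combination this
    have hNd : ∀ w, dd (fun w => (NN w : k) * g w) w = 0 := by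
      intro w
      have : (fun w => (NN w : k) * g w) =
          fun w => (-1) * dd (fun x => hp x g) w + 0 * dd (fun x => hp x g) w := by
        funext w; rw [hN]; ring
      rw [this, dd_lin, dd_dd (hp_cyc hg)]; simp
    obtain ⟨h1, hc1, he1⟩ := ih (fun w => 1 * ((NN w : k) * g w) + (-(r + 1)) * g w)
      (hg.N.lin hg _ _) (fun w => by rw [dd_lin, hNd, hd]; simp) (by
        intro w hw
        have h0 : g w ≠ 0 := by intro h; simp [h] at hw
        have := hs w h0
        refine ⟨this.1, ?_⟩
        by_contra h
        have h2 : NN w = r + 1 := by omega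
        apply hw
        rw [h2]; push_cast; ring)
    have hr : ((r : k) + 1) ≠ 0 := by exact_mod_cast Nat.succ_ne_zero r
    refine ⟨fun x => (-1 / (r + 1 : k)) * hp x g + (-1 / (r + 1 : k)) * h1 x,
      (hp_cyc hg).lin hc1 _ _, fun w => ?_⟩
    rw [dd_lin, ← he1, ]
    have := hN w
    field_simp
    linear_combination this

theorem tr_pos_e (v : List Bool) (h : tr (v ++ [false]) = 0) : v = List.replicate v.length false := by
  induction v with
  | nil => simp
  | cons a v ih =>
    cases v with
    | nil => cases a <;> simp_all [tr, one]
    | cons b v =>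
      simp only [List.cons_append, tr] at h ih
      have := ih (by omega)
      have hb : b = false := by simpa [List.replicate_succ] using (List.cons.inj this).1
      subst hb
      cases a
      · rw [this]; simp [List.replicate_succ]
      · simp [one] at h

theorem tr_pos_t (v : List Bool) (h : tr (true :: v) = 0) : v = List.replicate v.length true := by
  induction v with
  | nil => simp
  | cons a v ih =>
    cases a
    · simp [tr, one] at h
    · simp only [tr] at h
      have := ih (by omega)
      rw [this]; simp [List.replicate_succ]

theorem NN_zero (w : List Bool) (h : NN w = 0) :
    w = List.replicate w.length false ∨ w = List.replicate w.length true := by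
  cases w with
  | nil => simp
  | cons a v =>
    cases a
    · left
      rw [NN_e] at h
      have := tr_pos_e v h
      rw [this]; simp [List.replicate_succ]
    · right
      have := tr_pos_t _ h
      simp only [List.length_append, List.length_singleton, List.replicate_succ',
        List.length_cons, List.length_nil] at this
      have := List.append_inj_left' this rfl
      rw [this]; simp [List.replicate_succ]

theorem tr_le (v : List Bool) : tr v ≤ v.length := by
  induction v with
  | nil => simp [tr]
  | cons a v ih =>
    cases v with
    | nil => simp [tr]
    | cons b v =>
      have : one a b ≤ 1 := by unfold one; split_ifs <;> simp
      simp only [tr, List.length_cons] at ih ⊢; omega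

theorem NN_le (v : List Bool) : NN v ≤ v.length + 1 := by
  cases v with
  | nil => simp [NN]
  | cons a v => have := tr_le (a :: (v ++ [a])); simpa [NN] using this

theorem exact_main (p : ℕ) (g : List Bool → k) (hg : Cyc g) (hd : ∀ w, dd g w = 0)
    (hl : ∀ w, w.length ≠ p → g w = 0) (h1 : g (List.replicate p false) = 0)
    (h2 : g (List.replicate p true) = 0) : ∃ h, Cyc h ∧ ∀ w, g w = dd h w := by
  apply exact_aux (p + 1) g hg hd
  intro w hw
  have hlen : w.length = p := by by_contra h; exact hw (hl w h)
  refine ⟨?_, hlen ▸ NN_le w⟩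
  by_contra h
  rcases NN_zero w (by omega) with h | h <;> rw [hlen] at h <;> rw [h] at hw <;> simp_all

theorem Cyc.even_false {f : List Bool → k} (hf : Cyc f) (n : ℕ) :
    f (List.replicate (2 * n + 2) false) = 0 := by
  have := hf false (List.replicate (2 * n + 1) false)
  rw [← List.replicate_succ, ← List.replicate_succ', sg_eq] at this
  simp [List.count_replicate, pow_succ, pow_mul] at this
  linear_combination this / 2

theorem dd_odd_false {f : List Bool → k} (hf : Cyc f) (n : ℕ) :
    dd f (List.replicate (2 * n + 3) false) = 0 := by
  rw [List.replicate_succ, dd_e, bp_congr _ _ (fun _ => 0), bp_zero, neg_zero]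
  intro x h1 h2
  have : x = List.replicate (2 * n + 1) false := by
    rw [List.eq_replicate_iff]
    simp [List.count_replicate] at h1 h2
    refine ⟨h1, fun b hb => ?_⟩
    cases b
    · rfl
    · exact absurd hb (List.count_eq_zero.1 h2)
  rw [this, ← List.replicate_succ, hf.even_false]

theorem dd_len {f : List Bool → k} (p : ℕ) (hf : Cyc f) (hl : ∀ w, w.length ≠ p → f w = 0)
    (hd : ∀ w, w.length = p + 1 → dd f w = 0) (w : List Bool) : dd f w = 0 := by
  refine (dd_cyc hf).zero (fun v => ?_) (dd_true _) w
  by_cases h : v.length = p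
  · exact hd _ (by simp [h])
  · rw [dd_e, bp_congr _ _ (fun _ => 0), bp_zero, neg_zero]
    intro x h1 h2
    apply hl
    simp only [List.length_cons]; omega

def fM (w : List Bool) : k := if false ∈ w then 0 else 1

def fP (w : List Bool) : k := if true ∈ w ∨ Even w.length then 0 else 1

theorem fM_cyc : Cyc (fM (k := k)) := by
  intro a v
  cases a <;> simp [fM]

theorem fM_dd (w : List Bool) : dd (fM (k := k)) w = 0 := by
  refine (dd_cyc fM_cyc).zero (fun v => ?_) (dd_true _) w
  rw [dd_e]
  simp [fM, bp_zero]

theorem fP_cyc : Cyc (fP (k := k)) := by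
  intro a v
  cases a
  · by_cases h : true ∈ v
    · simp [fP, h]
    · have hc : v.count true = 0 := List.count_eq_zero.2 h
      simp only [fP, sg_eq, hc]
      by_cases h2 : Even v.length
      · simp [h2, h]
      · simp [h, Nat.even_add_one, h2]
  · simp [fP]

theorem fP_dd (w : List Bool) : dd (fP (k := k)) w = 0 := by
  refine (dd_cyc fP_cyc).zero (fun v => ?_) (dd_true _) w
  by_cases h : true ∈ v
  · rw [dd_e, bp_congr _ _ (fun _ => 0), bp_zero, neg_zero]
    intro x h1 h2
    have : true ∈ x := by
      rw [← List.count_pos_iff, h2, List.count_pos_iff]; exact h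
    simp [fP, this]
  · have hv : v = List.replicate v.length false := by
      apply List.eq_replicate_of_mem
      intro b hb
      cases b <;> simp_all
    by_cases h2 : Even v.length
    · rw [dd_e, bp_congr _ _ (fun _ => 0), bp_zero, neg_zero]
      intro x h1 h2'
      have h3 : Even (x.length + 1) := by rw [h1]; exact h2
      simp [fP, h3]
    · obtain ⟨m, hm⟩ := Nat.not_even_iff_odd.1 h2
      rw [hv, hm, ← List.replicate_succ]
      exact (dd_cyc fP_cyc).even_false m


theorem sgn_ofFn (n : ℕ) (ε : Fin n → Bool) :
    (-1 : k) ^ (∑ i, sdeg (ε i)) = sg (List.ofFn ε) := by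
  induction n with
  | zero => simp [sg]
  | succ n ih =>
    rw [Fin.sum_univ_succ, pow_add, ih, List.ofFn_succ, sg]
    cases ε 0 <;> simp [sdeg, ep]

theorem fstL_elt (a : Bool) : fstL (elt a : DualNumber k) = if a then 0 else 1 := by
  change (elt a : DualNumber k).fst = _
  cases a <;> simp [elt]

theorem sndL_elt (a : Bool) : sndL (elt a : DualNumber k) = if a then 1 else 0 := by
  change (elt a : DualNumber k).snd = _
  cases a <;> simp [elt]

theorem elt_mul (a b : Bool) : (elt a : DualNumber k) * elt b = if a && b then 0 else elt (a || b) := by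
  cases a <;> cases b <;> simp [elt]

/-- contraction at position `j` -/
def con {p : ℕ} (ε : Fin (p + 2) → Bool) (j : Fin (p + 1)) (i : Fin (p + 1)) : Bool :=
  if i = j then ε i.castSucc || ε i.succ
  else if (i : ℕ) < (j : ℕ) then ε i.castSucc else ε i.succ

theorem con_zero {p : ℕ} (ε : Fin (p + 2) → Bool) :
    List.ofFn (con ε 0) = (ε 0 || ε 1) :: List.ofFn (fun i : Fin p => ε i.succ.succ) := by
  rw [List.ofFn_succ]
  simp [con]

theorem con_succ {p : ℕ} (ε : Fin (p + 3) → Bool) (j : Fin (p + 1)) :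
    List.ofFn (con ε j.succ) = ε 0 :: List.ofFn (con (fun i => ε i.succ) j) := by
  rw [List.ofFn_succ]
  have h0 : con ε j.succ 0 = ε 0 := by
    have : (0 : Fin (p + 2)) ≠ j.succ := (Fin.succ_ne_zero j).symm
    simp [con, this]
  have h1 : (fun i : Fin (p + 1) => con ε j.succ i.succ) = con (fun i => ε i.succ) j := by
    funext i
    simp only [con, Fin.succ_inj, Fin.val_succ, Nat.add_lt_add_iff_right, Fin.succ_castSucc]
  rw [h0, h1]

theorem bridge_bp (p : ℕ) : ∀ (ε : Fin (p + 2) → Bool) (F : List Bool → k),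
    (∑ j : Fin (p + 1),
      (-1 : k) ^ (∑ i : Fin (p + 2), if (i : ℕ) ≤ (j : ℕ) then sdeg (ε i) else 0)
        * (if ε j.castSucc && ε j.succ then 0 else F (List.ofFn (con ε j))))
    = bp (List.ofFn ε) F := by
  have hsg : ∀ a : Bool, (-1 : k) ^ sdeg a = ep a := by intro a; cases a <;> simp [sdeg, ep]
  induction p with
  | zero =>
    intro ε F
    simp [bp, con, Fin.sum_univ_two, hsg]
  | succ p ih =>
    intro ε F
    rw [Fin.sum_univ_succ, List.ofFn_succ (f := ε), List.ofFn_succ (f := fun i => ε i.succ), bp]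
    have := ih (fun i => ε i.succ) (fun x => F (ε 0 :: x))
    rw [List.ofFn_succ] at this
    rw [← this, con_zero, mul_add, Finset.mul_sum]
    congr 1
    · rw [Fin.sum_univ_succ]
      simp [hsg]
    · apply Finset.sum_congr rfl
      intro j _
      rw [con_succ, Fin.sum_univ_succ, pow_add]
      simp [hsg, mul_assoc]

theorem sum_tail {n : ℕ} (ε : Fin (n + 1) → Bool) :
    (∑ i : Fin (n + 1), if (i : ℕ) = 0 then 0 else sdeg (ε i)) = ∑ i : Fin n, sdeg (ε i.succ) := by
  rw [Fin.sum_univ_succ]; simp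

theorem bridge_dd (p : ℕ) (g : MultilinearMap k (fun _ : Fin (p + 1) => DualNumber k) k)
    (f : List Bool → k) (hf : ∀ ε : Fin (p + 1) → Bool, f (List.ofFn ε) = g (fun i => elt (ε i)))
    (ε : Fin (p + 2) → Bool) : cyclicGD p g ε = dd f (List.ofFn ε) := by
  rw [cyclicGD, dd, ← bridge_bp]
  congr 1
  · apply Finset.sum_congr rfl
    intro j _
    rw [zsmul_eq_mul]
    push_cast
    congr 1
    split_ifs with h
    · apply g.map_coord_zero j
      simp only [if_true, elt_mul, h]
    · rw [hf]
      congr 1; funext i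
      unfold con
      by_cases hij : i = j
      · subst hij; simp only [if_true, elt_mul, h, if_false]; simp
      · simp only [hij, if_false]; split_ifs <;> rfl
  · rw [zsmul_eq_mul, sum_tail, List.ofFn_succ, wr]
    push_cast
    congr 1
    · rw [mul_comm, pow_mul, sgn_ofFn]
      have := sg_sq (k := k) (List.ofFn fun i => ε i.succ)
      generalize (sg (List.ofFn fun i => ε i.succ) : k) = S at this ⊢
      cases ε 0
      · simp [sdeg, pow_two, this]
      · simp [sdeg]
    · rw [List.ofFn_succ', List.concat_eq_append, wl_append]
      have hl : (Fin.last p).succ = Fin.last (p + 1) := rfl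
      rw [hl]
      split_ifs with h
      · apply g.map_coord_zero (Fin.last p)
        simp only [Fin.val_last, if_true, elt_mul, h]
      · have : (List.ofFn fun i : Fin p => ε i.castSucc.succ) ++ [ε (Fin.last (p + 1)) || ε 0]
          = List.ofFn (fun i : Fin (p + 1) => if (i : ℕ) = p then ε (Fin.last (p + 1)) || ε 0
              else ε i.succ) := by
          rw [List.ofFn_succ', List.concat_eq_append]
          congr 1
          · congr 1; funext i
            have := i.2.ne
            simp [this]
          · simp
        rw [this, hf]
        congr 1; funext i
        by_cases hi : (i : ℕ) = p
        · simp only [hi, if_true, elt_mul, h, if_false]; simp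
        · simp only [hi, if_false]

theorem ofFn_rot {p : ℕ} (ε : Fin (p + 1) → Bool) :
    List.ofFn (fun i => ε (finRotate (p + 1) i)) = (List.ofFn fun i : Fin p => ε i.succ) ++ [ε 0] := by
  rw [List.ofFn_succ', List.concat_eq_append, finRotate_last]
  congr 2; funext i
  congr 1
  exact finRotate_of_lt i.2

theorem cyc_sign {p : ℕ} (ε : Fin (p + 1) → Bool) (x : k) :
    ((-1 : ℤ) ^ (sdeg (ε 0) *
            ∑ i : Fin (p + 1), if (i : ℕ) = 0 then 0 else sdeg (ε i))) • x
    = (if ε 0 then 1 else sg (List.ofFn fun i : Fin p => ε i.succ)) * x := by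
  rw [zsmul_eq_mul, sum_tail]
  push_cast
  rw [mul_comm (sdeg _), pow_mul, sgn_ofFn]
  cases ε 0 <;> simp [sdeg]

theorem bridge_cyc (p : ℕ) (g : MultilinearMap k (fun _ : Fin (p + 1) => DualNumber k) k)
    (f : List Bool → k) (hf : ∀ ε : Fin (p + 1) → Bool, f (List.ofFn ε) = g (fun i => elt (ε i)))
    (hc : Cyc f) : IsCyclicG p g := by
  intro ε
  rw [cyc_sign, ← hf, ← hf (fun i => ε (finRotate (p + 1) i)), ofFn_rot, List.ofFn_succ, hc]

noncomputable def toL (p : ℕ) (g : MultilinearMap k (fun _ : Fin (p + 1) => DualNumber k) k)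
    (w : List Bool) : k :=
  if w.length = p + 1 then g (fun i => elt (w.getD i true)) else 0

theorem toL_ofFn (p : ℕ) (g : MultilinearMap k (fun _ : Fin (p + 1) => DualNumber k) k)
    (ε : Fin (p + 1) → Bool) : toL p g (List.ofFn ε) = g (fun i => elt (ε i)) := by
  rw [toL, if_pos (by simp)]
  congr 1; funext i
  congr 1
  rw [List.getD_eq_getElem _ _ (by simp [i.2]), List.getElem_ofFn]

theorem exists_ofFn (w : List Bool) (n : ℕ) (h : w.length = n) :
    ∃ ε : Fin n → Bool, w = List.ofFn ε := by
  subst h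
  exact ⟨w.get, (List.ofFn_get w).symm⟩

theorem toL_cyc (p : ℕ) (g : MultilinearMap k (fun _ : Fin (p + 1) => DualNumber k) k)
    (hg : IsCyclicG p g) : Cyc (toL p g) := by
  intro a v
  by_cases h : v.length = p
  · obtain ⟨ε, hε⟩ := exists_ofFn (a :: v) (p + 1) (by simp [h])
    have h1 := hg ε
    rw [cyc_sign, ← toL_ofFn, ← toL_ofFn p g (fun i => ε (finRotate (p + 1) i)), ofFn_rot, ← hε] at h1
    rw [List.ofFn_succ] at hε
    obtain ⟨h2, h3⟩ := List.cons.inj hε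
    rw [← h2, ← h3] at h1
    exact h1
  · simp [toL, h]

theorem toL_dd (p : ℕ) (g : MultilinearMap k (fun _ : Fin (p + 1) => DualNumber k) k)
    (hg : IsCyclicG p g) (hd : ∀ ε : Fin (p + 2) → Bool, cyclicGD p g ε = 0) (w : List Bool) :
    dd (toL p g) w = 0 := by
  refine dd_len (p + 1) (toL_cyc p g hg) (fun w hw => by simp [toL, hw]) (fun w hw => ?_) w
  obtain ⟨ε, rfl⟩ := exists_ofFn w _ hw
  rw [← bridge_dd p g _ (toL_ofFn p g), hd]

/-- multilinear map with given values on basis tuples -/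
noncomputable def ofL (m : ℕ) (f : List Bool → k) :
    MultilinearMap k (fun _ : Fin m => DualNumber k) k :=
  ∑ ε : Fin m → Bool, f (List.ofFn ε) •
    (MultilinearMap.mkPiAlgebra k (Fin m) k).compLinearMap fun i => if ε i then sndL else fstL

theorem ofL_ofFn (m : ℕ) (f : List Bool → k) (ε : Fin m → Bool) :
    f (List.ofFn ε) = ofL m f (fun i => elt (ε i)) := by
  classical
  have key : ∀ a b : Bool, (if a then sndL else fstL : DualNumber k →ₗ[k] k) (elt b)
      = if a = b then 1 else 0 := by
    intro a b; cases a <;> cases b <;> simp [sndL_elt, fstL_elt]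
  simp only [ofL, MultilinearMap.sum_apply, MultilinearMap.smul_apply,
    MultilinearMap.compLinearMap_apply, MultilinearMap.mkPiAlgebra_apply, key, smul_eq_mul]
  rw [Finset.sum_eq_single ε]
  · simp
  · intro δ _ hδ
    obtain ⟨i, hi⟩ := Function.ne_iff.1 hδ
    rw [Finset.prod_eq_zero (Finset.mem_univ i), mul_zero]
    simp [hi]
  · simp

theorem lamM_ofFn (m : ℕ) (ε : Fin m → Bool) :
    fM (List.ofFn ε) = lamM (k := k) m (fun i => elt (ε i)) := by
  simp only [lamM, MultilinearMap.compLinearMap_apply, MultilinearMap.mkPiAlgebra_apply, fM]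
  split_ifs with h
  · obtain ⟨i, hi⟩ := (List.mem_ofFn' _ _).1 h
    rw [Finset.prod_eq_zero (Finset.mem_univ i)]
    simp [hi, sndL_elt]
  · rw [Finset.prod_eq_one]
    intro i _
    have : ε i = true := by
      by_contra h2
      exact h ((List.mem_ofFn' _ _).2 ⟨i, by simpa using h2⟩)
    simp [this, sndL_elt]

theorem lamP_ofFn (m : ℕ) (ε : Fin (2 * m + 1) → Bool) :
    fP (List.ofFn ε) = lamP (k := k) (2 * m + 1) (fun i => elt (ε i)) := by
  simp only [lamP, MultilinearMap.compLinearMap_apply, MultilinearMap.mkPiAlgebra_apply, fP,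
    List.length_ofFn]
  have he : ¬ Even (2 * m + 1) := by simp
  simp only [he, or_false]
  split_ifs with h
  · obtain ⟨i, hi⟩ := (List.mem_ofFn' _ _).1 h
    rw [Finset.prod_eq_zero (Finset.mem_univ i)]
    simp [hi, fstL_elt]
  · rw [Finset.prod_eq_one]
    intro i _
    have : ε i = false := by
      by_contra h2
      exact h ((List.mem_ofFn' _ _).2 ⟨i, by simpa using h2⟩)
    simp [this, fstL_elt]

theorem ext_one {f g : MultilinearMap k (fun _ : Fin 1 => DualNumber k) k}
    (h1 : f (fun _ => elt true) = g (fun _ => elt true))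
    (h2 : f (fun _ => elt false) = g (fun _ => elt false)) : f = g := by
  have key : ∀ (f : MultilinearMap k (fun _ : Fin 1 => DualNumber k) k) x,
      f x = (x 0).fst * f (fun _ => elt false) + (x 0).snd * f (fun _ => elt true) := by
    intro f x
    have hu : ∀ y : DualNumber k, Function.update x 0 y = fun _ => y := by
      intro y; funext i; rw [Subsingleton.elim i 0]; simp
    have hx : x = Function.update x 0 ((x 0).fst • elt false + (x 0).snd • elt true) := by
      rw [hu]; funext i; rw [Subsingleton.elim i 0]
      ext <;> simp [elt]
    conv_lhs => rw [hx]
    rw [f.map_update_add, f.map_update_smul, f.map_update_smul, hu, hu]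
    simp
  ext x
  rw [key f, key g, h1, h2]

theorem even_part (n : ℕ) (g : MultilinearMap k (fun _ : Fin (2 * n + 3) => DualNumber k) k)
    (hg : IsCyclicG (k := k) (2 * n + 2) g)
    (hd : ∀ ε : Fin (2 * n + 4) → Bool, cyclicGD (k := k) (2 * n + 2) g ε = 0) :
        ∃! cd : k × k,
          ∃ h : MultilinearMap k (fun _ : Fin (2 * n + 2) => DualNumber k) k,
            IsCyclicG (k := k) (2 * n + 1) h ∧
            ∀ ε : Fin (2 * n + 3) → Bool,
              g (fun i => elt (ε i))
                = cd.1 * lamP (k := k) (2 * n + 3) (fun i => elt (ε i))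
                  + cd.2 * lamM (k := k) (2 * n + 3) (fun i => elt (ε i))
                  + cyclicGD (k := k) (2 * n + 1) h ε := by
  have hP := lamP_ofFn (k := k) (n + 1)
  have hM := lamM_ofFn (k := k) (2 * n + 3)
  have hG := toL_ofFn (k := k) (2 * n + 2) g
  have rp : ∀ b : Bool, (List.ofFn fun _ : Fin (2 * n + 3) => b) = List.replicate (2 * n + 3) b :=
    fun b => List.ofFn_const _ _
  have P0 : fP (k := k) (List.replicate (2 * n + 3) false) = 1 := by
    simp [fP, Nat.even_add_one, show ¬ Even (2 * n + 3) by simp [parity_simps]]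
  have P1 : fP (k := k) (List.replicate (2 * n + 3) true) = 0 := by simp [fP]
  have M0 : fM (k := k) (List.replicate (2 * n + 3) false) = 0 := by simp [fM]
  have M1 : fM (k := k) (List.replicate (2 * n + 3) true) = 1 := by simp [fM]
  set c := toL (2 * n + 2) g (List.replicate (2 * n + 3) false) with hc
  set d := toL (2 * n + 2) g (List.replicate (2 * n + 3) true) with hd'
  refine ⟨(c, d), ?_, ?_⟩
  · -- remove the other lengths from the two model cocycles
    let L : List Bool → k := toL (2 * n + 2) (c • lamP (k := k) (2 * n + 3) + d • lamM (2 * n + 3))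
    have hL : ∀ w : List Bool, w.length = 2 * n + 3 → L w = c * fP w + d * fM w := by
      intro w hw
      obtain ⟨ε, rfl⟩ := exists_ofFn w _ hw
      have hPε : fP (List.ofFn ε) = lamP (k := k) (2 * n + 3) (fun i => elt (ε i)) := hP ε
      simp only [L]
      rw [toL_ofFn, hM, hPε]
      simp
    have hfun : ∀ ε : Fin (2 * n + 3) → Bool, (fun w => c * fP w + d * fM w) (List.ofFn ε)
        = (c • lamP (k := k) (2 * n + 3) + d • lamM (2 * n + 3) :
          MultilinearMap k (fun _ : Fin (2 * n + 3) => DualNumber k) k) (fun i => elt (ε i)) := by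
      intro ε
      have hPε : fP (List.ofFn ε) = lamP (k := k) (2 * n + 3) (fun i => elt (ε i)) := hP ε
      beta_reduce
      rw [hM, hPε]; simp
    have hcyc := fP_cyc.lin (fM_cyc (k := k)) c d
    have hLc : Cyc L := toL_cyc _ _ (bridge_cyc (2 * n + 2) _ _ hfun hcyc)
    have hLd : ∀ w, dd L w = 0 := by
      apply toL_dd
      · exact bridge_cyc (2 * n + 2) _ _ hfun hcyc
      · intro ε
        rw [bridge_dd (2 * n + 2) _ (fun w => c * fP w + d * fM w) hfun, dd_lin, fP_dd, fM_dd]; simp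
    obtain ⟨h, h1, h2⟩ := exact_main (2 * n + 3) (fun w => 1 * toL (2 * n + 2) g w + (-1) * L w)
      ((toL_cyc _ g hg).lin hLc 1 (-1))
      (fun w => by rw [dd_lin, toL_dd _ g hg hd, hLd]; simp)
      (fun w hw => by simp [L, toL, hw])
      (by beta_reduce; rw [hL _ (by simp), P0, M0, ← hc]; ring)
      (by beta_reduce; rw [hL _ (by simp), P1, M1, ← hd']; ring)
    refine ⟨ofL _ h, bridge_cyc _ _ h (ofL_ofFn _ h) h1, fun ε => ?_⟩
    rw [bridge_dd _ _ h (ofL_ofFn _ h), ← h2, hL _ (by simp), ← hM, hG]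
    have hPε : fP (List.ofFn ε) = lamP (k := k) (2 * n + 3) (fun i => elt (ε i)) := hP ε
    rw [← hPε]; ring
  · rintro ⟨c', d'⟩ ⟨h, h1, h2⟩
    have hh := toL_cyc _ h h1
    have key : ∀ b : Bool, toL (2 * n + 2) g (List.replicate (2 * n + 3) b)
        = c' * fP (List.replicate (2 * n + 3) b) + d' * fM (List.replicate (2 * n + 3) b)
          + dd (toL _ h) (List.replicate (2 * n + 3) b) := by
      intro b
      have h3 := h2 (fun _ => b)
      have hPε := hP (fun _ => b)
      rw [bridge_dd _ _ _ (toL_ofFn _ h), rp] at h3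
      rw [← rp, hG, hM, h3]
      rw [show fP (List.ofFn fun _ : Fin (2 * n + 3) => b) =
        lamP (k := k) (2 * n + 3) (fun i => elt b) from hPε, rp]
    have k0 := key false
    have k1 := key true
    rw [dd_odd_false hh, P0, M0] at k0
    rw [dd_true, P1, M1] at k1
    ext
    · simp only [hc, k0]; ring
    · simp only [hd', k1]; ring

theorem odd_part (n : ℕ) (g : MultilinearMap k (fun _ : Fin (2 * n + 2) => DualNumber k) k)
    (hg : IsCyclicG (k := k) (2 * n + 1) g)
    (hd : ∀ ε : Fin (2 * n + 3) → Bool, cyclicGD (k := k) (2 * n + 1) g ε = 0) :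
        ∃! c : k,
          ∃ h : MultilinearMap k (fun _ : Fin (2 * n + 1) => DualNumber k) k,
            IsCyclicG (k := k) (2 * n) h ∧
            ∀ ε : Fin (2 * n + 2) → Bool,
              g (fun i => elt (ε i))
                = c * lamM (k := k) (2 * n + 2) (fun i => elt (ε i))
                  + cyclicGD (k := k) (2 * n) h ε := by
  have hM := lamM_ofFn (k := k) (2 * n + 2)
  have hG := toL_ofFn (k := k) (2 * n + 1) g
  have M1 : fM (k := k) (List.replicate (2 * n + 2) true) = 1 := by simp [fM]
  set d := toL (2 * n + 1) g (List.replicate (2 * n + 2) true) with hd'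
  refine ⟨d, ?_, ?_⟩
  · let L : List Bool → k := toL (2 * n + 1) (lamM (k := k) (2 * n + 2))
    have hL : ∀ w : List Bool, w.length = 2 * n + 2 → L w = fM w := by
      intro w hw
      obtain ⟨ε, rfl⟩ := exists_ofFn w _ hw
      simp only [L]
      rw [toL_ofFn, hM]
    have hcy := bridge_cyc (2 * n + 1) _ _ hM fM_cyc
    have hLc : Cyc L := toL_cyc _ _ hcy
    have hLd : ∀ w, dd L w = 0 := by
      apply toL_dd _ _ hcy
      intro ε
      rw [bridge_dd (2 * n + 1) _ _ hM, fM_dd]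
    have hcc := (toL_cyc _ g hg).lin hLc 1 (-d)
    obtain ⟨h, h1, h2⟩ := exact_main (2 * n + 2) (fun w => 1 * toL (2 * n + 1) g w + (-d) * L w)
      hcc
      (fun w => by rw [dd_lin, toL_dd _ g hg hd, hLd]; simp)
      (fun w hw => by simp [L, toL, hw])
      (hcc.even_false n)
      (by beta_reduce; rw [hL _ (by simp), M1, ← hd']; ring)
    refine ⟨ofL _ h, bridge_cyc _ _ h (ofL_ofFn _ h) h1, fun ε => ?_⟩
    rw [bridge_dd _ _ h (ofL_ofFn _ h), ← h2, hL _ (by simp), ← hM, hG]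
    ring
  · rintro c' ⟨h, h1, h2⟩
    have h3 := h2 (fun _ => true)
    rw [bridge_dd _ _ _ (toL_ofFn _ h), ← hM (fun _ => true), ← hG (fun _ => true),
      List.ofFn_const, dd_true, M1, ← hd'] at h3
    rw [h3]; ring

theorem zero_part (g : MultilinearMap k (fun _ : Fin 1 => DualNumber k) k) :
    ∃! cd : k × k, g = cd.1 • lamP (k := k) 1 + cd.2 • lamM (k := k) 1 := by
  refine ⟨(g (fun _ => elt false), g (fun _ => elt true)), ?_, ?_⟩
  · apply ext_one <;> simp [lamP, lamM, fstL_elt, sndL_elt]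
  · rintro ⟨c, d⟩ rfl
    simp [lamP, lamM, fstL_elt, sndL_elt]

end GC

theorem grassmann_cyclic_cohomology :
    -- λ⁺ is a cyclic cocycle in each even degree 2n
    (∀ n : ℕ, IsCyclicG (k := k) (2 * n) (lamP (k := k) (2 * n + 1))
      ∧ ∀ ε : Fin (2 * n + 2) → Bool, cyclicGD (k := k) (2 * n) (lamP (k := k) (2 * n + 1)) ε = 0)
    -- λ⁻ is a cyclic cocycle in each degree n
    ∧ (∀ n : ℕ, IsCyclicG (k := k) n (lamM (k := k) (n + 1))
      ∧ ∀ ε : Fin (n + 2) → Bool, cyclicGD (k := k) n (lamM (k := k) (n + 1)) ε = 0)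
    -- HC⁰ ≅ k²: no coboundaries in degree 0
    ∧ (∀ g : MultilinearMap k (fun _ : Fin 1 => DualNumber k) k,
        IsCyclicG (k := k) 0 g → (∀ ε : Fin 2 → Bool, cyclicGD (k := k) 0 g ε = 0) →
        ∃! cd : k × k, g = cd.1 • lamP (k := k) 1 + cd.2 • lamM (k := k) 1)
    -- HC^{2n+2} ≅ k² with basis the classes of λ⁺, λ⁻
    ∧ (∀ (n : ℕ) (g : MultilinearMap k (fun _ : Fin (2 * n + 3) => DualNumber k) k),
        IsCyclicG (k := k) (2 * n + 2) g →
        (∀ ε : Fin (2 * n + 4) → Bool, cyclicGD (k := k) (2 * n + 2) g ε = 0) →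
        ∃! cd : k × k,
          ∃ h : MultilinearMap k (fun _ : Fin (2 * n + 2) => DualNumber k) k,
            IsCyclicG (k := k) (2 * n + 1) h ∧
            ∀ ε : Fin (2 * n + 3) → Bool,
              g (fun i => elt (ε i))
                = cd.1 * lamP (k := k) (2 * n + 3) (fun i => elt (ε i))
                  + cd.2 * lamM (k := k) (2 * n + 3) (fun i => elt (ε i))
                  + cyclicGD (k := k) (2 * n + 1) h ε)
    -- HC^{2n+1} ≅ k with basis the class of λ⁻
    ∧ (∀ (n : ℕ) (g : MultilinearMap k (fun _ : Fin (2 * n + 2) => DualNumber k) k),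
        IsCyclicG (k := k) (2 * n + 1) g →
        (∀ ε : Fin (2 * n + 3) → Bool, cyclicGD (k := k) (2 * n + 1) g ε = 0) →
        ∃! c : k,
          ∃ h : MultilinearMap k (fun _ : Fin (2 * n + 1) => DualNumber k) k,
            IsCyclicG (k := k) (2 * n) h ∧
            ∀ ε : Fin (2 * n + 2) → Bool,
              g (fun i => elt (ε i))
                = c * lamM (k := k) (2 * n + 2) (fun i => elt (ε i))
                  + cyclicGD (k := k) (2 * n) h ε) := by
  refine ⟨fun n => ⟨?_, fun ε => ?_⟩, fun n => ⟨?_, fun ε => ?_⟩, fun g _ _ => GC.zero_part g,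
    GC.even_part, GC.odd_part⟩
  · exact GC.bridge_cyc _ _ _ (GC.lamP_ofFn n) GC.fP_cyc
  · rw [GC.bridge_dd _ _ _ (GC.lamP_ofFn n), GC.fP_dd]
  · exact GC.bridge_cyc _ _ _ (GC.lamM_ofFn (n + 1)) GC.fM_cyc
  · rw [GC.bridge_dd _ _ _ (GC.lamM_ofFn (n + 1)), GC.fM_dd]
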